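/- (Variance of the IPS estimator.) Assume common support: for all x, a, π(a|x) > 0 implies π₀(a|x) > 0, and let w(x,a) := π(a|x)/π₀(a|x) (convention t/0 = 0). Let Y(x,a,r) := w(x,a) · ρ(r), a real random variable under the joint distribution μ(x,a,r) := p(x)·π₀(a|x)·p(r|x,a). Then Var_μ[Y] = Σ_x p(x) Σ_a π₀(a|x) · w(x,a)² · σ²(x,a) + Σ_x p(x) · Var_{π₀(·|x)}[ a ↦ w(x,a) · q(x,a) ] + Var_p[ x ↦ Σ_a π(a|x) q(x,a) ]. -/

import Mathlib

open Finset

/-- Variance of a real-valued function `Z` under a distribution `ν` on a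
finite type: `Var_ν[Z] = ∑ ω, ν ω * (Z ω - ∑ ω', ν ω' * Z ω')²`. -/
noncomputable def distVar {Ω : Type*} [Fintype Ω] (ν Z : Ω → ℝ) : ℝ :=
  ∑ ω, ν ω * (Z ω - ∑ ω', ν ω' * Z ω') ^ 2

lemma sum_sq_shift {Ω : Type*} [Fintype Ω] (ν Z : Ω → ℝ) (h : ∑ i, ν i = 1) (m c : ℝ)
    (hm : ∑ i, ν i * Z i = m) :
    ∑ i, ν i * (Z i - c) ^ 2 = ∑ i, ν i * (Z i - m) ^ 2 + (m - c) ^ 2 := by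
  have h1 : ∀ i, ν i * (Z i - c) ^ 2
      = ν i * (Z i - m) ^ 2 + (2 * (m - c) * (ν i * Z i) + ((m - c) ^ 2 - 2 * (m - c) * m) * ν i) := by
    intro i; ring
  simp only [h1, sum_add_distrib, ← mul_sum, hm, h]
  ring

/-- Variance of the IPS estimator: under common support, with the vanilla importance weight `w(x,a) = π(a|x)/π₀(a|x)` (convention `t/0 = 0`), the
variance of the per-sample IPS random variable `Y(x,a,r) = w(x,a)·ρ(r)`
decomposes into the three stated terms. -/
theorem ips_variance
    {X A R : Type*} [Fintype X] [Fintype A] [Fintype R]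
    [Nonempty X] [Nonempty A] [Nonempty R]
    (p : X → ℝ) (hp : ∀ x, 0 ≤ p x) (hpsum : ∑ x, p x = 1)
    (π₀ π : X → A → ℝ)
    (hπ₀ : ∀ x a, 0 ≤ π₀ x a) (hπ₀sum : ∀ x, ∑ a, π₀ x a = 1)
    (hπ : ∀ x a, 0 ≤ π x a) (hπsum : ∀ x, ∑ a, π x a = 1)
    (q : X → A → ℝ)
    (ρ : R → ℝ) (pr : X → A → R → ℝ)
    (hpr : ∀ x a r, 0 ≤ pr x a r) (hprsum : ∀ x a, ∑ r, pr x a r = 1)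
    (hmean : ∀ x a, ∑ r, pr x a r * ρ r = q x a)
    (hsupp : ∀ x a, 0 < π x a → 0 < π₀ x a) :
    distVar (fun z : X × A × R => p z.1 * π₀ z.1 z.2.1 * pr z.1 z.2.1 z.2.2)
        (fun z : X × A × R => (π z.1 z.2.1 / π₀ z.1 z.2.1) * ρ z.2.2)
      = (∑ x, p x * ∑ a, π₀ x a * (π x a / π₀ x a) ^ 2 *
            (∑ r, pr x a r * (ρ r - q x a) ^ 2))
        + (∑ x, p x * distVar (π₀ x)
            (fun a => (π x a / π₀ x a) * q x a))
        + distVar p (fun x => ∑ a, π x a * q x a) := by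
  have hw : ∀ x a, π₀ x a * (π x a / π₀ x a) = π x a := by
    intro x a
    rcases (hπ x a).eq_or_lt with h0 | h0
    · simp [← h0]
    · have := (hsupp x a h0).ne'
      field_simp
  have hV : ∀ x, ∑ a, π₀ x a * (π x a / π₀ x a * q x a) = ∑ a, π x a * q x a := by
    intro x
    refine sum_congr rfl fun a _ => ?_
    rw [← mul_assoc, hw]
  have hM : ∑ z : X × A × R, p z.1 * π₀ z.1 z.2.1 * pr z.1 z.2.1 z.2.2 *
      (π z.1 z.2.1 / π₀ z.1 z.2.1 * ρ z.2.2) = ∑ x, p x * ∑ a, π x a * q x a := by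
    simp only [Fintype.sum_prod_type]
    refine sum_congr rfl fun x _ => ?_
    rw [← hV, mul_sum]
    refine sum_congr rfl fun a _ => ?_
    rw [← hmean, mul_sum, mul_sum, mul_sum]
    refine sum_congr rfl fun r _ => ?_
    ring
  unfold distVar
  simp only [hM, hV]
  generalize ∑ x, p x * ∑ a, π x a * q x a = M
  simp only [Fintype.sum_prod_type]
  rw [← sum_add_distrib, ← sum_add_distrib]
  refine sum_congr rfl fun x _ => ?_
  rw [← mul_add, ← mul_add, add_assoc, ← sum_sq_shift (π₀ x) _ (hπ₀sum x) _ M (hV x),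
    ← sum_add_distrib, mul_sum]
  refine sum_congr rfl fun a _ => ?_
  have hr : ∑ r, pr x a r * (π x a / π₀ x a * ρ r) = π x a / π₀ x a * q x a := by
    rw [← hmean, mul_sum]
    exact sum_congr rfl fun r _ => by ring
  have h2 := sum_sq_shift (pr x a) (fun r => π x a / π₀ x a * ρ r) (hprsum x a) _ M hr
  have h3 : ∑ r, pr x a r * (π x a / π₀ x a * ρ r - π x a / π₀ x a * q x a) ^ 2
      = (π x a / π₀ x a) ^ 2 * ∑ r, pr x a r * (ρ r - q x a) ^ 2 := by
    rw [mul_sum]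
    exact sum_congr rfl fun r _ => by ring
  simp only [mul_assoc (p x * π₀ x a), ← mul_sum]
  rw [h2, h3]
  ring
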